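/- arXiv:1710.09702 — 2 statements merged into one kernel-verified Lean document; each statement's English description precedes it below -/
import Mathlib

section
/- For any point P in the plane, any radius R > 0, and any A > 1, the sum of 1/⟨p⟩² over all lattice points p ∈ ℤ² lying on the circle of radius R centered at P and satisfying |p| ≥ A is bounded by C·A⁻¹ for an absolute constant C, where ⟨p⟩ = (1+|p|²)^{1/2}. -/
open scoped BigOperators

/-!
A vertical line meets a circle in at most two points, so it is enough to weigh each lattice point
by a function of its abscissa `x` alone. Since `|p| ≥ A` forces `|x| + A ≲ ⟨p⟩`, the weight
`1 / ((|x| + A) (|x| + A + 1))` dominates `1 / ⟨p⟩²`, and its sum over `x ∈ ℤ` telescopes to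
`1 / A + 1 / (A + 1)`.
-/

section BoundedFibers

variable {ι κ : Type*} {f : ι → κ} {g : κ → ℝ} {k : ℕ}

theorem sum_comp_le_of_encard_fiber_le
    (hf : ∀ b, (f ⁻¹' {b}).encard ≤ k) (hg : ∀ b, 0 ≤ g b) (hg_sum : Summable g)
    (s : Finset ι) : ∑ i ∈ s, g (f i) ≤ k * ∑' b, g b := by
  classical
  have card_fiber_le (b : κ) : (s.filter (f · = b)).card ≤ k := by
    have h : ((s.filter (f · = b) : Finset ι) : Set ι).encard ≤ k :=
      (Set.encard_le_encard fun i hi => (Finset.mem_filter.mp hi).2).trans (hf b)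
    rwa [Set.encard_coe_eq_coe_finsetCard, Nat.cast_le] at h
  calc ∑ i ∈ s, g (f i) = ∑ b ∈ s.image f, (s.filter (f · = b)).card • g b := Finset.sum_comp g f
    _ ≤ ∑ b ∈ s.image f, k • g b :=
        Finset.sum_le_sum fun b _ => nsmul_le_nsmul_left (hg b) (card_fiber_le b)
    _ = k * ∑ b ∈ s.image f, g b := by rw [← Finset.smul_sum, nsmul_eq_mul]
    _ ≤ k * ∑' b, g b := by
        gcongr
        exact hg_sum.sum_le_tsum _ fun b _ => hg b

theorem summable_comp_of_encard_fiber_le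
    (hf : ∀ b, (f ⁻¹' {b}).encard ≤ k) (hg : ∀ b, 0 ≤ g b) (hg_sum : Summable g) :
    Summable fun i => g (f i) :=
  summable_of_sum_le (fun i => hg (f i)) (sum_comp_le_of_encard_fiber_le hf hg hg_sum)

theorem tsum_comp_le_of_encard_fiber_le
    (hf : ∀ b, (f ⁻¹' {b}).encard ≤ k) (hg : ∀ b, 0 ≤ g b) (hg_sum : Summable g) :
    ∑' i, g (f i) ≤ k * ∑' b, g b :=
  Real.tsum_le_of_sum_le (fun i => hg (f i)) (sum_comp_le_of_encard_fiber_le hf hg hg_sum)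

end BoundedFibers

section Telescoping

variable {a : ℝ}

theorem hasSum_nat_inv_add_mul_add_one (ha : 0 < a) :
    HasSum (fun n : ℕ => ((n + a) * (n + a + 1))⁻¹) a⁻¹ := by
  have eq_sub (n : ℕ) :
      ((n + a) * (n + a + 1))⁻¹ = ((n : ℝ) + a)⁻¹ - (((n + 1 : ℕ) : ℝ) + a)⁻¹ := by
    push_cast
    field_simp
    ring
  have tendsto_zero : Filter.Tendsto (fun n : ℕ => ((n : ℝ) + a)⁻¹) Filter.atTop (nhds 0) :=
    (Filter.tendsto_atTop_add_const_right _ a tendsto_natCast_atTop_atTop).inv_tendsto_atTop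
  rw [hasSum_iff_tendsto_nat_of_nonneg fun n => by positivity]
  simp_rw [eq_sub, Finset.sum_range_sub']
  simpa using tendsto_zero.const_sub a⁻¹

theorem hasSum_int_inv_abs_add_mul_add_one (ha : 0 < a) :
    HasSum (fun n : ℤ => ((|(n : ℝ)| + a) * (|(n : ℝ)| + a + 1))⁻¹) (a⁻¹ + (a + 1)⁻¹) := by
  refine HasSum.of_nat_of_neg_add_one ?_ ?_
  · simpa using hasSum_nat_inv_add_mul_add_one ha
  · refine (hasSum_nat_inv_add_mul_add_one (add_pos ha one_pos)).congr_fun fun n => ?_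
    have abs_eq : |((-((n : ℤ) + 1) : ℤ) : ℝ)| = n + 1 := by
      push_cast
      rw [abs_neg, abs_of_nonneg (by positivity)]
    rw [abs_eq]
    ring

end Telescoping

theorem one_div_one_add_sq_add_sq_le {x y A : ℝ} (hA : 0 < A) (h : A ≤ √(x ^ 2 + y ^ 2)) :
    1 / (1 + x ^ 2 + y ^ 2) ≤ 6 * ((|x| + A) * (|x| + A + 1))⁻¹ := by
  have sq_le : A ^ 2 ≤ |x| ^ 2 + y ^ 2 := by rwa [sq_abs, ← Real.le_sqrt' hA]
  have sq_add_le : (|x| + A) ^ 2 ≤ 4 * (|x| ^ 2 + y ^ 2) :=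
    calc (|x| + A) ^ 2 ≤ 2 * (|x| ^ 2 + A ^ 2) := add_sq_le
      _ ≤ 4 * (|x| ^ 2 + y ^ 2) := by linarith [sq_nonneg y]
  have add_le : 2 * (|x| + A) ≤ (|x| + A) ^ 2 + 1 := by
    simpa using two_mul_le_add_sq (|x| + A) 1
  rw [← sq_abs x, ← div_eq_mul_inv, div_le_div_iff₀ (by positivity) (by positivity)]
  linarith

theorem encard_setOf_sub_sq_eq_le_two (c t : ℝ) : {y : ℝ | (y - c) ^ 2 = t}.encard ≤ 2 := by
  have subset_pair : {y : ℝ | (y - c) ^ 2 = t} ⊆ {c + √t, c - √t} := by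
    rintro y hy
    have abs_eq : |y - c| = √t := by rw [← Real.sqrt_sq_eq_abs, hy]
    rcases eq_or_eq_neg_of_abs_eq abs_eq with h | h
    · exact Or.inl (by linarith)
    · exact Or.inr (by rw [Set.mem_singleton_iff]; linarith)
  calc {y : ℝ | (y - c) ^ 2 = t}.encard ≤ ({c + √t, c - √t} : Set ℝ).encard :=
        Set.encard_le_encard subset_pair
    _ ≤ ({c - √t} : Set ℝ).encard + 1 := Set.encard_insert_le _ _
    _ = 2 := by rw [Set.encard_singleton, one_add_one_eq_two]

theorem encard_lattice_circle_inter_vertical_le_two (P : ℝ × ℝ) (R : ℝ) (x : ℤ) :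
    {p : ℤ × ℤ | ((p.1 : ℝ) - P.1) ^ 2 + ((p.2 : ℝ) - P.2) ^ 2 = R ^ 2 ∧ p.1 = x}.encard ≤ 2 := by
  refine (Set.encard_le_encard_of_injOn (f := fun p => (p.2 : ℝ)) ?_ ?_).trans
    (encard_setOf_sub_sq_eq_le_two P.2 (R ^ 2 - (x - P.1) ^ 2))
  · rintro p ⟨on_circle, rfl⟩
    exact eq_sub_of_add_eq' on_circle
  · rintro p ⟨-, hp⟩ q ⟨-, hq⟩ hpq
    exact Prod.ext (hp.trans hq.symm) (Int.cast_injective hpq)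

theorem stmt_0_general {S : Set (ℤ × ℤ)} {k : ℕ} (hS : ∀ x, {p | p ∈ S ∧ p.1 = x}.encard ≤ k)
    {A : ℝ} (hA : 0 < A) :
    Summable (fun p : {p : ℤ × ℤ // p ∈ S ∧ A ≤ √((p.1 : ℝ) ^ 2 + (p.2 : ℝ) ^ 2)} =>
      1 / (1 + ((p : ℤ × ℤ).1 : ℝ) ^ 2 + ((p : ℤ × ℤ).2 : ℝ) ^ 2)) ∧
    ∑' p : {p : ℤ × ℤ // p ∈ S ∧ A ≤ √((p.1 : ℝ) ^ 2 + (p.2 : ℝ) ^ 2)},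
      1 / (1 + ((p : ℤ × ℤ).1 : ℝ) ^ 2 + ((p : ℤ × ℤ).2 : ℝ) ^ 2) ≤ 12 * k * A⁻¹ := by
  set T := {p : ℤ × ℤ // p ∈ S ∧ A ≤ √((p.1 : ℝ) ^ 2 + (p.2 : ℝ) ^ 2)}
  set w : ℤ → ℝ := fun n => ((|(n : ℝ)| + A) * (|(n : ℝ)| + A + 1))⁻¹
  have w_nonneg (n : ℤ) : 0 ≤ w n := by positivity
  have w_hasSum : HasSum w (A⁻¹ + (A + 1)⁻¹) := hasSum_int_inv_abs_add_mul_add_one hA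
  have fiber_le (x : ℤ) : ((fun p : T => p.1.1) ⁻¹' {x}).encard ≤ k :=
    (Set.encard_le_encard_of_injOn (t := {p | p ∈ S ∧ p.1 = x}) (fun p hp => ⟨p.2.1, hp⟩)
      Subtype.val_injective.injOn).trans (hS x)
  have term_le (p : T) : 1 / (1 + (p.1.1 : ℝ) ^ 2 + (p.1.2 : ℝ) ^ 2) ≤ 6 * w p.1.1 :=
    one_div_one_add_sq_add_sq_le hA p.2.2
  have w_comp_summable : Summable fun p : T => 6 * w p.1.1 :=
    (summable_comp_of_encard_fiber_le fiber_le w_nonneg w_hasSum.summable).mul_left 6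
  have term_summable : Summable fun p : T => 1 / (1 + (p.1.1 : ℝ) ^ 2 + (p.1.2 : ℝ) ^ 2) :=
    w_comp_summable.of_nonneg_of_le (fun p => by positivity) term_le
  refine ⟨term_summable, ?_⟩
  calc ∑' p : T, 1 / (1 + (p.1.1 : ℝ) ^ 2 + (p.1.2 : ℝ) ^ 2)
      ≤ ∑' p : T, 6 * w p.1.1 := term_summable.tsum_le_tsum term_le w_comp_summable
    _ = 6 * ∑' p : T, w p.1.1 := tsum_mul_left
    _ ≤ 6 * (k * (A⁻¹ + (A + 1)⁻¹)) := by
        rw [← w_hasSum.tsum_eq]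
        gcongr
        exact tsum_comp_le_of_encard_fiber_le fiber_le w_nonneg w_hasSum.summable
    _ ≤ 6 * (k * (A⁻¹ + A⁻¹)) := by
        gcongr
        linarith
    _ = 12 * k * A⁻¹ := by ring

/-- For any point `P` in the plane, radius `R > 0` and `A > 1`, the sum of
`1/⟨p⟩² = 1/(1+|p|²)` over lattice points `p ∈ ℤ²` on the circle of radius
`R` centered at `P` with `|p| ≥ A` is at most `C · A⁻¹`. -/
theorem stmt_0 :
    ∃ C : ℝ, 0 < C ∧
      ∀ (P : ℝ × ℝ) (R A : ℝ), 0 < R → 1 < A →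
        (∑' p : {p : ℤ × ℤ //
            ((p.1 : ℝ) - P.1) ^ 2 + ((p.2 : ℝ) - P.2) ^ 2 = R ^ 2 ∧
            A ≤ Real.sqrt ((p.1 : ℝ) ^ 2 + (p.2 : ℝ) ^ 2)},
          1 / (1 + ((p : ℤ × ℤ).1 : ℝ) ^ 2 + ((p : ℤ × ℤ).2 : ℝ) ^ 2)) ≤ C * A⁻¹ := by
  exact ⟨12 * (2 : ℕ), by norm_num, fun P R _ _ hA =>
    (stmt_0_general (encard_lattice_circle_inter_vertical_le_two P R) (one_pos.trans hA)).2⟩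
end

section
/- There is an absolute constant C such that for every j ∈ ℤ², the sum over all triples (p₁,p₂,p₃) ∈ (ℤ²)³ with p₁ − p₂ + p₃ = j and |p₁|² − |p₂|² + |p₃|² = |j|² of the quantity ⟨j⟩² · ⟨p₁⟩⁻² ⟨p₂⟩⁻² ⟨p₃⟩⁻² is at most C. -/
open scoped BigOperators

/-- `|p|²` for `p ∈ ℤ²`. -/
def zsq (p : ℤ × ℤ) : ℤ := p.1 ^ 2 + p.2 ^ 2

/-- The square of the Japanese bracket `⟨p⟩² = 1 + |p|²`, as a real number. -/
def jb2 (p : ℤ × ℤ) : ℝ := 1 + (p.1 : ℝ) ^ 2 + (p.2 : ℝ) ^ 2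

/-- The resonant set `R(j)` of triples `(p₁,p₂,p₃)` with `p₁ - p₂ + p₃ = j` and
`|p₁|² - |p₂|² + |p₃|² = |j|²`. -/
def Res (j : ℤ × ℤ) : Set ((ℤ × ℤ) × (ℤ × ℤ) × (ℤ × ℤ)) :=
  {q | q.1 - q.2.1 + q.2.2 = j ∧ zsq q.1 - zsq q.2.1 + zsq q.2.2 = zsq j}

/-!
A triple `(p, w, r)` lies in `R(j)` exactly when `j p w r` is a (possibly degenerate) rectangle,
with right angles at `p` and at `r`. The law `⟨j⟩² + ⟨w⟩² = ⟨p⟩² + ⟨r⟩²` bounds the summand by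
`⟨p⟩⁻²⟨w⟩⁻² + ⟨r⟩⁻²⟨w⟩⁻²`, so it suffices to sum `⟨p⟩⁻²⟨w⟩⁻²` over the pairs with a right angle at
`p ≠ j`. If `⟨w⟩ ≤ ⟨p⟩`, fix `w`: then `p` lies on the circle with diameter `j w`, and is known up
to two choices from its first coordinate. If `⟨p⟩ ≤ ⟨w⟩`, fix `p`: then `w` lies on a line, and is
known from one of its coordinates. In both cases the pair is encoded by the smaller point `a` and
one coordinate `n` of the larger point `b`, and `⟨a⟩⁻²⟨b⟩⁻² ≤ (⟨a⟩⁴⟨b⟩²)^(-2/3)` is dominated by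
`((1 + a₁²)(1 + a₂²)(1 + n²))^(-2/3)`, which is summable over `ℤ³`. If `p = j`, there is no
constraint on `w`, but then `r = w` and the summand is `⟨w⟩⁻⁴`.
-/

open Set
open scoped ENNReal

section Sums

variable {α β : Type*}

lemma tsum_comp_le_tsum_subtype_of_injOn {s : Set α} {t : Set β} (g : β → ℝ≥0∞) {e : α → β}
    (hmaps : MapsTo e s t) (hinj : InjOn e s) : ∑' x : s, g (e x) ≤ ∑' y : t, g y :=
  (tsum_image g hinj).symm.trans_le (ENNReal.tsum_mono_subtype g hmaps.image_subset)

lemma tsum_subtype_le_tsum_of_injOn {s : Set α} {f : α → ℝ≥0∞} {g : β → ℝ≥0∞} {e : α → β}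
    (hinj : InjOn e s) (hfg : ∀ x ∈ s, f x ≤ g (e x)) : ∑' x : s, f x ≤ ∑' y, g y :=
  calc ∑' x : s, f x ≤ ∑' x : s, g (e x) := ENNReal.tsum_le_tsum fun x ↦ hfg x x.2
    _ ≤ ∑' y : (univ : Set β), g y := tsum_comp_le_tsum_subtype_of_injOn g (mapsTo_univ e s) hinj
    _ = ∑' y, g y := tsum_univ g

lemma tsum_subtype_le_two_mul_tsum_of_injOn {s t : Set α} {f : α → ℝ≥0∞} {g : β → ℝ≥0∞}
    {e₁ e₂ : α → β} (hinj₁ : InjOn e₁ (s ∩ t)) (hinj₂ : InjOn e₂ (s \ t))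
    (hfg₁ : ∀ x ∈ s, f x ≤ g (e₁ x)) (hfg₂ : ∀ x ∈ s, f x ≤ g (e₂ x)) :
    ∑' x : s, f x ≤ 2 * ∑' y, g y :=
  calc ∑' x : s, f x = ∑' x : ↑(s ∩ t ∪ s \ t), f x := by rw [inter_union_sdiff]
    _ ≤ ∑' x : ↑(s ∩ t), f x + ∑' x : ↑(s \ t), f x := ENNReal.tsum_union_le f _ _
    _ ≤ ∑' y, g y + ∑' y, g y :=
        add_le_add (tsum_subtype_le_tsum_of_injOn hinj₁ fun x hx ↦ hfg₁ x hx.1)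
          (tsum_subtype_le_tsum_of_injOn hinj₂ fun x hx ↦ hfg₂ x hx.1)
    _ = 2 * ∑' y, g y := (two_mul _).symm

lemma summable_and_tsum_le_of_tsum_ofReal_le {f : α → ℝ} (hf : ∀ a, 0 ≤ f a) {C : ℝ≥0∞}
    (hC : C ≠ ∞) (h : ∑' a, ENNReal.ofReal (f a) ≤ C) : Summable f ∧ ∑' a, f a ≤ C.toReal := by
  have hsum : Summable f := by
    simpa only [ENNReal.toReal_ofReal (hf _)] using
      ENNReal.summable_toReal (ne_top_of_le_ne_top hC h)
  rw [← ENNReal.ofReal_tsum_of_nonneg hf hsum] at h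
  exact ⟨hsum, (ENNReal.ofReal_le_iff_le_toReal hC).1 h⟩

lemma summable_one_add_sq_rpow_neg {s : ℝ} (hs : 1 / 2 < s) :
    Summable fun n : ℤ ↦ (1 + (n : ℝ) ^ 2) ^ (-s) := by
  refine (Real.summable_abs_int_rpow (b := 2 * s) (by linarith)).of_norm_bounded_eventually ?_
  filter_upwards [(finite_singleton (0 : ℤ)).compl_mem_cofinite] with n hn
  have hn_pos : 0 < |(n : ℝ)| := abs_pos.2 (Int.cast_ne_zero.2 hn)
  calc ‖(1 + (n : ℝ) ^ 2) ^ (-s)‖ = (1 + |(n : ℝ)| ^ 2) ^ (-s) := by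
        rw [Real.norm_of_nonneg (by positivity), sq_abs]
    _ ≤ (|(n : ℝ)| ^ 2) ^ (-s) :=
        Real.rpow_le_rpow_of_nonpos (by positivity) (by linarith) (by linarith)
    _ = |(n : ℝ)| ^ (-(2 * s)) := by
        rw [← Real.rpow_natCast_mul hn_pos.le, Nat.cast_ofNat, mul_neg]

end Sums

section Weights

lemma one_le_jb2 (p : ℤ × ℤ) : 1 ≤ jb2 p := by
  unfold jb2; nlinarith [sq_nonneg (p.1 : ℝ), sq_nonneg (p.2 : ℝ)]

lemma jb2_pos (p : ℤ × ℤ) : 0 < jb2 p := zero_lt_one.trans_le (one_le_jb2 p)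

lemma one_add_fst_sq_le_jb2 (p : ℤ × ℤ) : 1 + (p.1 : ℝ) ^ 2 ≤ jb2 p :=
  le_add_of_nonneg_right (sq_nonneg _)

lemma one_add_snd_sq_le_jb2 (p : ℤ × ℤ) : 1 + (p.2 : ℝ) ^ 2 ≤ jb2 p := by
  unfold jb2; nlinarith [sq_nonneg (p.1 : ℝ)]

/-- The weight `((1 + a₁²)(1 + a₂²)(1 + n²))^(-2/3)` on `ℤ² × ℤ`: a summable majorant for sums over
pairs of lattice points that are encoded by one point `a` and one coordinate `n` of the other. -/
noncomputable def codeWeight (c : (ℤ × ℤ) × ℤ) : ℝ :=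
  (1 + (c.1.1 : ℝ) ^ 2) ^ (-(2 / 3) : ℝ) * (1 + (c.1.2 : ℝ) ^ 2) ^ (-(2 / 3) : ℝ) *
    (1 + (c.2 : ℝ) ^ 2) ^ (-(2 / 3) : ℝ)

lemma summable_codeWeight : Summable codeWeight := by
  have hone := summable_one_add_sq_rpow_neg (s := 2 / 3) (by norm_num)
  exact (hone.mul_of_nonneg hone (fun _ ↦ by positivity) fun _ ↦ by positivity).mul_of_nonneg hone
    (fun _ ↦ by positivity) fun _ ↦ by positivity

lemma one_div_mul_le_sq_mul_rpow {a b : ℝ} (ha : 0 < a) (hab : a ≤ b) :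
    1 / (a * b) ≤ (a ^ 2 * b) ^ (-(2 / 3) : ℝ) := by
  have hb : 0 < b := ha.trans_le hab
  have hcube : (a ^ 2 * b) ^ 2 ≤ (a * b) ^ 3 :=
    calc (a ^ 2 * b) ^ 2 = a ^ 3 * b ^ 2 * a := by ring
      _ ≤ a ^ 3 * b ^ 2 * b := by gcongr
      _ = (a * b) ^ 3 := by ring
  have hroot : (a ^ 2 * b) ^ (2 / 3 : ℝ) ≤ a * b :=
    calc (a ^ 2 * b) ^ (2 / 3 : ℝ) = ((a ^ 2 * b) ^ 2) ^ (1 / 3 : ℝ) := by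
          rw [← Real.rpow_natCast_mul (by positivity)]; norm_num
      _ ≤ ((a * b) ^ 3) ^ (1 / 3 : ℝ) := by gcongr
      _ = a * b := by rw [← Real.rpow_natCast_mul (by positivity)]; norm_num
  rw [Real.rpow_neg (by positivity), ← one_div]
  exact one_div_le_one_div_of_le (by positivity) hroot

lemma one_div_jb2_mul_jb2_le_codeWeight {a b : ℤ × ℤ} {n : ℤ} (hab : jb2 a ≤ jb2 b)
    (hn : 1 + (n : ℝ) ^ 2 ≤ jb2 b) : 1 / (jb2 a * jb2 b) ≤ codeWeight (a, n) := by
  have hcoord : (1 + (a.1 : ℝ) ^ 2) * (1 + (a.2 : ℝ) ^ 2) ≤ jb2 a ^ 2 := by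
    rw [sq (jb2 a)]
    exact mul_le_mul (one_add_fst_sq_le_jb2 a) (one_add_snd_sq_le_jb2 a) (by positivity)
      (jb2_pos a).le
  calc 1 / (jb2 a * jb2 b) ≤ (jb2 a ^ 2 * jb2 b) ^ (-(2 / 3) : ℝ) :=
        one_div_mul_le_sq_mul_rpow (jb2_pos a) hab
    _ ≤ ((1 + (a.1 : ℝ) ^ 2) * (1 + (a.2 : ℝ) ^ 2) * (1 + (n : ℝ) ^ 2)) ^ (-(2 / 3) : ℝ) :=
        Real.rpow_le_rpow_of_nonpos (by positivity)
          (mul_le_mul hcoord hn (by positivity) (by positivity)) (by norm_num)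
    _ = codeWeight (a, n) := by
        rw [Real.mul_rpow (by positivity) (by positivity),
          Real.mul_rpow (by positivity) (by positivity), codeWeight]

end Weights

section RightAngles

/-- The triangle `j p w` in `ℤ²` has a right angle at `p`: the inner product of `p - j` and `w - p`
vanishes. Degenerate triangles, with `p = j` or `p = w`, are included. -/
def IsRightAngle (j p w : ℤ × ℤ) : Prop :=
  (p.1 - j.1) * (w.1 - p.1) + (p.2 - j.2) * (w.2 - p.2) = 0

/-- The pairs `(p, w)` with `p ≠ j` for which `j p w` has a right angle at `p`. -/
def rightAnglePairs (j : ℤ × ℤ) : Set ((ℤ × ℤ) × (ℤ × ℤ)) :=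
  {x | IsRightAngle j x.1 x.2 ∧ x.1 ≠ j}

/-- The weight `⟨p⟩⁻² ⟨w⟩⁻²` of a pair `(p, w)`, extended-real-valued so that its sums need no
convergence proofs. -/
noncomputable def pairWeight (x : (ℤ × ℤ) × (ℤ × ℤ)) : ℝ≥0∞ :=
  ENNReal.ofReal (1 / (jb2 x.1 * jb2 x.2))

variable {j p p' w w' : ℤ × ℤ}

-- Vieta: `p.2` and `p'.2` are roots of the same monic quadratic.
lemma IsRightAngle.snd_eq_or_snd_add_snd_eq (h : IsRightAngle j p w) (h' : IsRightAngle j p' w)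
    (hfst : p.1 = p'.1) : p.2 = p'.2 ∨ p.2 + p'.2 = j.2 + w.2 := by
  unfold IsRightAngle at h h'
  rw [hfst] at h
  have hprod : (p.2 - p'.2) * (j.2 + w.2 - (p.2 + p'.2)) = 0 := by linear_combination h - h'
  rcases mul_eq_zero.1 hprod with hsub | hsub
  · exact Or.inl (sub_eq_zero.1 hsub)
  · exact Or.inr (sub_eq_zero.1 hsub).symm

lemma IsRightAngle.snd_eq_of_fst_eq (h : IsRightAngle j p w) (h' : IsRightAngle j p w')
    (hp : p.2 ≠ j.2) (hfst : w.1 = w'.1) : w.2 = w'.2 := by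
  unfold IsRightAngle at h h'
  rw [hfst] at h
  have hprod : (p.2 - j.2) * (w.2 - w'.2) = 0 := by linear_combination h - h'
  exact sub_eq_zero.1 ((mul_eq_zero.1 hprod).resolve_left (sub_ne_zero.2 hp))

lemma IsRightAngle.swap (h : IsRightAngle j p w) : IsRightAngle j.swap p.swap w.swap :=
  (add_comm _ _).trans h

lemma tsum_pairWeight_arc_le (j : ℤ × ℤ) :
    ∑' x : {x ∈ rightAnglePairs j | jb2 x.2 ≤ jb2 x.1}, pairWeight x ≤
      2 * ∑' c, ENNReal.ofReal (codeWeight c) := by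
  have hbound : ∀ x ∈ {x ∈ rightAnglePairs j | jb2 x.2 ≤ jb2 x.1},
      pairWeight x ≤ ENNReal.ofReal (codeWeight (x.2, x.1.1)) := by
    rintro x ⟨-, hle⟩
    rw [pairWeight, mul_comm]
    exact ENNReal.ofReal_le_ofReal
      (one_div_jb2_mul_jb2_le_codeWeight hle (one_add_fst_sq_le_jb2 x.1))
  refine tsum_subtype_le_two_mul_tsum_of_injOn (t := {x | j.2 + x.2.2 ≤ 2 * x.1.2}) ?_ ?_
    hbound hbound
  all_goals
    rintro ⟨p, w⟩ ⟨⟨⟨hangle, -⟩, -⟩, harc⟩ ⟨p', w'⟩ ⟨⟨⟨hangle', -⟩, -⟩, harc'⟩ hcode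
    obtain ⟨rfl, hfst⟩ := Prod.mk.inj hcode
    have hsnd : p.2 = p'.2 := by
      obtain hsnd | hsum : p.2 = p'.2 ∨ p.2 + p'.2 = j.2 + w.2 :=
        hangle.snd_eq_or_snd_add_snd_eq hangle' hfst
      · exact hsnd
      · simp only [mem_ofPred_eq] at harc harc'
        omega
    exact Prod.ext (Prod.ext hfst hsnd) rfl

lemma tsum_pairWeight_line_le (j : ℤ × ℤ) :
    ∑' x : {x ∈ rightAnglePairs j | jb2 x.1 ≤ jb2 x.2}, pairWeight x ≤
      2 * ∑' c, ENNReal.ofReal (codeWeight c) := by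
  refine tsum_subtype_le_two_mul_tsum_of_injOn (t := {x | x.1.2 ≠ j.2})
    (e₁ := fun x ↦ (x.1, x.2.1)) (e₂ := fun x ↦ (x.1, x.2.2)) ?_ ?_
    (fun x hx ↦ ENNReal.ofReal_le_ofReal
      (one_div_jb2_mul_jb2_le_codeWeight hx.2 (one_add_fst_sq_le_jb2 x.2)))
    (fun x hx ↦ ENNReal.ofReal_le_ofReal
      (one_div_jb2_mul_jb2_le_codeWeight hx.2 (one_add_snd_sq_le_jb2 x.2)))
  · rintro ⟨p, w⟩ ⟨⟨⟨hangle, -⟩, -⟩, hsnd⟩ ⟨p', w'⟩ ⟨⟨⟨hangle', -⟩, -⟩, -⟩ hcode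
    obtain ⟨rfl, hfst⟩ := Prod.mk.inj hcode
    exact Prod.ext rfl (Prod.ext hfst (hangle.snd_eq_of_fst_eq hangle' hsnd hfst))
  · rintro ⟨p, w⟩ ⟨⟨⟨hangle, hne⟩, -⟩, hsnd⟩ ⟨p', w'⟩ ⟨⟨⟨hangle', -⟩, -⟩, -⟩ hcode
    obtain ⟨rfl, hw⟩ := Prod.mk.inj hcode
    have hfst : p.1 ≠ j.1 := fun hfst ↦ hne (Prod.ext hfst (not_not.1 hsnd))
    exact Prod.ext rfl (Prod.ext (hangle.swap.snd_eq_of_fst_eq hangle'.swap hfst hw) hw)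

theorem tsum_pairWeight_le_four_mul (j : ℤ × ℤ) :
    ∑' x : rightAnglePairs j, pairWeight x ≤
      4 * ∑' c, ENNReal.ofReal (codeWeight c) := by
  have hcover : rightAnglePairs j ⊆ {x ∈ rightAnglePairs j | jb2 x.2 ≤ jb2 x.1} ∪
      {x ∈ rightAnglePairs j | jb2 x.1 ≤ jb2 x.2} := fun x hx ↦
    (le_total (jb2 x.2) (jb2 x.1)).imp (⟨hx, ·⟩) (⟨hx, ·⟩)
  calc ∑' x : rightAnglePairs j, pairWeight x
    _ ≤ _ := ENNReal.tsum_mono_subtype pairWeight hcover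
    _ ≤ _ := ENNReal.tsum_union_le pairWeight _ _
    _ ≤ 2 * ∑' c, ENNReal.ofReal (codeWeight c) + 2 * ∑' c, ENNReal.ofReal (codeWeight c) :=
        add_le_add (tsum_pairWeight_arc_le j) (tsum_pairWeight_line_le j)
    _ = 4 * ∑' c, ENNReal.ofReal (codeWeight c) := by ring

end RightAngles

section Resonances

/-- The summand `⟨j⟩² ⟨p₁⟩⁻² ⟨p₂⟩⁻² ⟨p₃⟩⁻²` at the triple `q = (p₁, p₂, p₃)`. -/
noncomputable def resTerm (j : ℤ × ℤ) (q : (ℤ × ℤ) × (ℤ × ℤ) × (ℤ × ℤ)) : ℝ :=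
  jb2 j / (jb2 q.1 * jb2 q.2.1 * jb2 q.2.2)

variable {j p w r : ℤ × ℤ}

lemma resTerm_nonneg (j : ℤ × ℤ) (q : (ℤ × ℤ) × (ℤ × ℤ) × (ℤ × ℤ)) : 0 ≤ resTerm j q :=
  div_nonneg (jb2_pos _).le
    (mul_pos (mul_pos (jb2_pos _) (jb2_pos _)) (jb2_pos _)).le

lemma resTerm_reverse (j p w r : ℤ × ℤ) : resTerm j (r, w, p) = resTerm j (p, w, r) := by
  simp only [resTerm]; ring

lemma Res.reverse (h : (p, w, r) ∈ Res j) : (r, w, p) ∈ Res j := by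
  obtain ⟨hsum, hsq⟩ := h
  simp only at hsum hsq
  exact ⟨by rw [← hsum]; abel, by rw [← hsq]; ring⟩

lemma Res.eq_sub_add (h : (p, w, r) ∈ Res j) : r = j - p + w := by
  rw [← h.1]; abel

lemma Res.isRightAngle (h : (p, w, r) ∈ Res j) : IsRightAngle j p w := by
  obtain ⟨rfl, hsq⟩ := h
  simp only [zsq, Prod.fst_add, Prod.snd_add, Prod.fst_sub, Prod.snd_sub] at hsq
  refine mul_left_cancel₀ (two_ne_zero (α := ℤ)) ?_
  simp only [Prod.fst_add, Prod.snd_add, Prod.fst_sub, Prod.snd_sub]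
  linear_combination -hsq

lemma Res.jb2_add_jb2 (h : (p, w, r) ∈ Res j) : jb2 j + jb2 w = jb2 p + jb2 r := by
  have hsq : ((zsq p - zsq w + zsq r : ℤ) : ℝ) = zsq j := congrArg _ h.2
  simp only [zsq] at hsq
  push_cast at hsq
  simp only [jb2]
  linarith

lemma resTerm_le_of_mem_res (h : (p, w, r) ∈ Res j) :
    resTerm j (p, w, r) ≤ 1 / (jb2 p * jb2 w) + 1 / (jb2 r * jb2 w) := by
  have hp := jb2_pos p
  have hw := jb2_pos w
  have hr := jb2_pos r
  calc resTerm j (p, w, r) ≤ (jb2 p + jb2 r) / (jb2 p * jb2 w * jb2 r) := by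
        simp only [resTerm]
        gcongr
        linarith [Res.jb2_add_jb2 h]
    _ = 1 / (jb2 p * jb2 w) + 1 / (jb2 r * jb2 w) := by field_simp; ring

lemma ofReal_resTerm_le_pairWeight_add (h : (p, w, r) ∈ Res j) :
    ENNReal.ofReal (resTerm j (p, w, r)) ≤ pairWeight (p, w) + pairWeight (r, w) :=
  (ENNReal.ofReal_le_ofReal (resTerm_le_of_mem_res h)).trans ENNReal.ofReal_add_le

lemma injOn_res_fst_snd (j : ℤ × ℤ) : InjOn (fun q ↦ (q.1, q.2.1)) (Res j) := by
  rintro ⟨p, w, r⟩ h ⟨p', w', r'⟩ h' hpw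
  obtain ⟨rfl, rfl⟩ := Prod.mk.inj hpw
  rw [Res.eq_sub_add h, Res.eq_sub_add h']

lemma injOn_res_trd_snd (j : ℤ × ℤ) : InjOn (fun q ↦ (q.2.2, q.2.1)) (Res j) := by
  rintro ⟨p, w, r⟩ h ⟨p', w', r'⟩ h' hrw
  obtain ⟨rfl, rfl⟩ := Prod.mk.inj hrw
  rw [Res.eq_sub_add (Res.reverse h), Res.eq_sub_add (Res.reverse h')]

lemma tsum_res_fst_eq_le (j : ℤ × ℤ) :
    ∑' q : {q ∈ Res j | q.1 = j}, ENNReal.ofReal (resTerm j q) ≤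
      ∑' c, ENNReal.ofReal (codeWeight c) := by
  refine tsum_subtype_le_tsum_of_injOn (f := fun q ↦ ENNReal.ofReal (resTerm j q))
    (e := fun q ↦ (q.2.1, q.2.1.1)) ?_ ?_
  · rintro q ⟨hq, hfst⟩ q' ⟨hq', hfst'⟩ hcode
    exact injOn_res_fst_snd j hq hq' (Prod.ext (hfst.trans hfst'.symm) (Prod.mk.inj hcode).1)
  · rintro ⟨p, w, r⟩ ⟨hq, rfl⟩
    obtain rfl : r = w := by simpa using Res.eq_sub_add hq
    have hterm : resTerm p (p, r, r) = 1 / (jb2 r * jb2 r) := by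
      have hp := (jb2_pos p).ne'
      simp only [resTerm]
      field_simp
    rw [hterm]
    exact ENNReal.ofReal_le_ofReal
      (one_div_jb2_mul_jb2_le_codeWeight le_rfl (one_add_fst_sq_le_jb2 r))

lemma tsum_res_trd_eq_le (j : ℤ × ℤ) :
    ∑' q : {q ∈ Res j | q.2.2 = j}, ENNReal.ofReal (resTerm j q) ≤
      ∑' c, ENNReal.ofReal (codeWeight c) := by
  let reverse (q : (ℤ × ℤ) × (ℤ × ℤ) × (ℤ × ℤ)) := (q.2.2, q.2.1, q.1)
  have hmaps : MapsTo reverse {q ∈ Res j | q.2.2 = j} {q ∈ Res j | q.1 = j} :=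
    fun _ hq ↦ ⟨Res.reverse hq.1, hq.2⟩
  have hinj : Function.Injective reverse :=
    Function.LeftInverse.injective (g := reverse) fun _ ↦ rfl
  calc ∑' q : {q ∈ Res j | q.2.2 = j}, ENNReal.ofReal (resTerm j q)
    _ = ∑' q : {q ∈ Res j | q.2.2 = j}, ENNReal.ofReal (resTerm j (reverse q)) :=
        tsum_congr fun q ↦ congrArg _ (resTerm_reverse ..).symm
    _ ≤ ∑' q : {q ∈ Res j | q.1 = j}, ENNReal.ofReal (resTerm j q) :=
        tsum_comp_le_tsum_subtype_of_injOn (fun q ↦ ENNReal.ofReal (resTerm j q)) hmaps hinj.injOn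
    _ ≤ ∑' c, ENNReal.ofReal (codeWeight c) := tsum_res_fst_eq_le j

lemma tsum_subset_res_le_two_mul {S : Set ((ℤ × ℤ) × (ℤ × ℤ) × (ℤ × ℤ))} (hS : S ⊆ Res j)
    (hfst : ∀ q ∈ S, q.1 ≠ j) (htrd : ∀ q ∈ S, q.2.2 ≠ j) :
    ∑' q : S, ENNReal.ofReal (resTerm j q) ≤ 2 * ∑' x : rightAnglePairs j, pairWeight x := by
  have hmaps_fst : MapsTo (fun q ↦ (q.1, q.2.1)) S (rightAnglePairs j) :=
    fun q hq ↦ ⟨Res.isRightAngle (hS hq), hfst q hq⟩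
  have hmaps_trd : MapsTo (fun q ↦ (q.2.2, q.2.1)) S (rightAnglePairs j) :=
    fun q hq ↦ ⟨Res.isRightAngle (Res.reverse (hS hq)), htrd q hq⟩
  have hle_fst :=
    tsum_comp_le_tsum_subtype_of_injOn pairWeight hmaps_fst ((injOn_res_fst_snd j).mono hS)
  have hle_trd :=
    tsum_comp_le_tsum_subtype_of_injOn pairWeight hmaps_trd ((injOn_res_trd_snd j).mono hS)
  calc ∑' q : S, ENNReal.ofReal (resTerm j q)
    _ ≤ ∑' q : S, (pairWeight (q.1.1, q.1.2.1) + pairWeight (q.1.2.2, q.1.2.1)) :=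
        ENNReal.tsum_le_tsum fun q ↦ ofReal_resTerm_le_pairWeight_add (hS q.2)
    _ = ∑' q : S, pairWeight (q.1.1, q.1.2.1) + ∑' q : S, pairWeight (q.1.2.2, q.1.2.1) :=
        ENNReal.tsum_add
    _ ≤ ∑' x : rightAnglePairs j, pairWeight x + ∑' x : rightAnglePairs j, pairWeight x :=
        add_le_add hle_fst hle_trd
    _ = 2 * ∑' x : rightAnglePairs j, pairWeight x := (two_mul _).symm

theorem tsum_res_le_ten_mul (j : ℤ × ℤ) :
    ∑' q : Res j, ENNReal.ofReal (resTerm j q) ≤ 10 * ∑' c, ENNReal.ofReal (codeWeight c) := by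
  have hcover : Res j ⊆ ({q ∈ Res j | q.1 = j} ∪ {q ∈ Res j | q.2.2 = j}) ∪
      {q ∈ Res j | q.1 ≠ j ∧ q.2.2 ≠ j} := by
    intro q hq
    simp only [mem_union, mem_ofPred_eq]
    tauto
  let f (q : (ℤ × ℤ) × (ℤ × ℤ) × (ℤ × ℤ)) : ℝ≥0∞ := ENNReal.ofReal (resTerm j q)
  let W : ℝ≥0∞ := ∑' c, ENNReal.ofReal (codeWeight c)
  calc ∑' q : Res j, f q
    _ ≤ _ := ENNReal.tsum_mono_subtype f hcover
    _ ≤ _ := ENNReal.tsum_union_le f _ _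
    _ ≤ _ := add_le_add_left (ENNReal.tsum_union_le f _ _) _
    _ ≤ W + W + 2 * (4 * W) := by
        gcongr
        · exact tsum_res_fst_eq_le j
        · exact tsum_res_trd_eq_le j
        · calc _ ≤ 2 * ∑' x : rightAnglePairs j, pairWeight x :=
                tsum_subset_res_le_two_mul (fun _ hq ↦ hq.1) (fun _ hq ↦ hq.2.1)
                  fun _ hq ↦ hq.2.2
            _ ≤ 2 * (4 * W) := by gcongr; exact tsum_pairWeight_le_four_mul j
    _ = 10 * W := by ring

end Resonances

-- Summability is part of the claim because `∑'` of a non-summable family is `0`.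
theorem stmt_1_general :
    ∃ C : ℝ, 0 < C ∧ ∀ j : ℤ × ℤ,
      Summable (fun q : Res j ↦ resTerm j q) ∧ ∑' q : Res j, resTerm j q ≤ C := by
  let C : ℝ≥0∞ := 10 * ∑' c, ENNReal.ofReal (codeWeight c)
  have hC : C ≠ ∞ := ENNReal.mul_ne_top (by simp) summable_codeWeight.tsum_ofReal_ne_top
  refine ⟨C.toReal + 1, by positivity, fun j ↦ ?_⟩
  obtain ⟨hsum, hle⟩ := summable_and_tsum_le_of_tsum_ofReal_le
    (fun q : Res j ↦ resTerm_nonneg j q) hC (tsum_res_le_ten_mul j)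
  exact ⟨hsum, hle.trans (by linarith)⟩

/-- There is an absolute constant `C` such that for every `j ∈ ℤ²`,
`∑_{(p₁,p₂,p₃) ∈ R(j)} ⟨j⟩² ⟨p₁⟩⁻² ⟨p₂⟩⁻² ⟨p₃⟩⁻² ≤ C`. -/
theorem stmt_1 :
    ∃ C : ℝ, 0 < C ∧ ∀ j : ℤ × ℤ,
      (∑' q : Res j, jb2 j / (jb2 (q : (ℤ × ℤ) × (ℤ × ℤ) × (ℤ × ℤ)).1 *
        jb2 (q : (ℤ × ℤ) × (ℤ × ℤ) × (ℤ × ℤ)).2.1 *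
        jb2 (q : (ℤ × ℤ) × (ℤ × ℤ) × (ℤ × ℤ)).2.2)) ≤ C := by
  obtain ⟨C, hC, hbound⟩ := stmt_1_general
  exact ⟨C, hC, fun j ↦ (hbound j).2⟩
end
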